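/- Under the IPW setup, the average direction treatment effect is identified from the observed data distribution: τ = atan2( E[(A/π(X)) sin Θ], E[(A/π(X)) cos Θ] ) − atan2( E[((1−A)/(1−π(X))) sin Θ], E[((1−A)/(1−π(X))) cos Θ] ). -/

import Mathlib

open MeasureTheory ProbabilityTheory Filter Topology

/-- `atan2 y x` is the angle of the complex number `x + i y`. -/
noncomputable def atan2 (y x : ℝ) : ℝ := Complex.arg ((x : ℂ) + (y : ℂ) * Complex.I)

/-!
Given the covariates, the treatment `A` and a function `W` of one potential outcome are
independent, so `E[A W | X] = π(X) E[W | X]`; dividing by the propensity `π(X)` and integrating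
gives `E[(A / π(X)) W] = E[W]`. By consistency, `W` may be replaced on the treated by the same
function of the observed outcome. Taking the sine and the cosine in both arms recovers the two
components of each mean direction.

Since `1 / π(X)` may be unbounded, integrability of the weighted outcome is not automatic. It comes
from the `ℝ≥0∞`-valued conditional expectation, from which `X`-measurable weights can be pulled out
without any integrability assumption.
-/

section Propensity

variable {Ω : Type*} {m mΩ : MeasurableSpace Ω} {μ : Measure Ω}

open scoped ENNReal

theorem lintegral_mul_condLExp (hm : m ≤ mΩ) [SigmaFinite (μ.trim hm)] {w X : Ω → ℝ≥0∞}
    (hw : Measurable[m] w) (hX : AEMeasurable X μ) :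
    ∫⁻ ω, w ω * μ⁻[X | m] ω ∂μ = ∫⁻ ω, w ω * X ω ∂μ := by
  have trim_eq : (μ.withDensity μ⁻[X | m]).trim hm = (μ.withDensity X).trim hm := by
    refine @Measure.ext Ω m _ _ fun s hs => ?_
    rw [trim_measurableSet_eq hm hs, trim_measurableSet_eq hm hs, withDensity_apply _ (hm s hs),
      withDensity_apply _ (hm s hs), setLIntegral_condLExp hm μ X hs]
  calc ∫⁻ ω, w ω * μ⁻[X | m] ω ∂μ
      = ∫⁻ ω, w ω ∂(μ.withDensity μ⁻[X | m]).trim hm := by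
        rw [lintegral_trim hm hw, lintegral_withDensity_eq_lintegral_mul₀
          (measurable_condLExp' m μ X).aemeasurable (hw.mono hm le_rfl).aemeasurable]
        simp only [Pi.mul_apply, mul_comm]
    _ = ∫⁻ ω, w ω * X ω ∂μ := by
        rw [trim_eq, lintegral_trim hm hw, lintegral_withDensity_eq_lintegral_mul₀
          hX (hw.mono hm le_rfl).aemeasurable]
        simp only [Pi.mul_apply, mul_comm]

theorem integrable_mul_condExp_iff (hm : m ≤ mΩ) [SigmaFinite (μ.trim hm)] {w f : Ω → ℝ}
    (hw : StronglyMeasurable[m] w) (hf : Integrable f μ) (hf0 : 0 ≤ᵐ[μ] f) :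
    Integrable (w * μ[f | m]) μ ↔ Integrable (w * f) μ := by
  have hwμ : AEStronglyMeasurable w μ := (hw.mono hm).aestronglyMeasurable
  have lintegral_enorm_eq : ∫⁻ ω, ‖(w * μ[f | m]) ω‖ₑ ∂μ = ∫⁻ ω, ‖(w * f) ω‖ₑ ∂μ := by
    simp only [Pi.mul_apply, enorm_mul]
    rw [← lintegral_mul_condLExp hm hw.enorm hf.1.enorm]
    refine lintegral_congr_ae ?_
    filter_upwards [condLExp_enorm m hf hf0] with ω hω
    rw [hω]
  simp only [Integrable, hasFiniteIntegral_iff_enorm, lintegral_enorm_eq, hwμ.mul hf.1,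
    hwμ.mul integrable_condExp.1, true_and]

theorem condExp_const_sub (hm : m ≤ mΩ) [IsFiniteMeasure μ] {E : Type*} [NormedAddCommGroup E]
    [NormedSpace ℝ E] [CompleteSpace E] (c : E) {f : Ω → E} (hf : Integrable f μ) :
    μ[fun ω => c - f ω | m] =ᵐ[μ] fun ω => c - μ[f | m] ω := by
  filter_upwards [condExp_sub (integrable_const c) hf m] with ω hω
  exact hω.trans (by rw [Pi.sub_apply, condExp_const hm])

variable [StandardBorelSpace Ω] [IsFiniteMeasure μ] {hm : m ≤ mΩ}

theorem ae_indepFun_condExpKernel_of_condIndepFun {β γ : Type*} [MeasurableSpace β]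
    [MeasurableSpace γ] [MeasurableSpace.CountableOrCountablyGenerated Ω (β × γ)] {X : Ω → β}
    {Y : Ω → γ} (hX : Measurable X) (hY : Measurable Y) (hXY : CondIndepFun m hm X Y μ) :
    ∀ᵐ ω ∂μ, IndepFun X Y (condExpKernel μ m ω) := by
  filter_upwards [ae_of_ae_trim hm
    ((condIndepFun_iff_map_prod_eq_prod_map_map hX hY).mp hXY)] with ω hω
  rw [indepFun_iff_map_prod_eq_prod_map_map hX.aemeasurable hY.aemeasurable]
  rwa [Kernel.map_apply _ (hX.prodMk hY), Kernel.prod_apply, Kernel.map_apply _ hX,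
    Kernel.map_apply _ hY] at hω

theorem condExp_mul_of_condIndepFun {X Y : Ω → ℝ} (hX : Measurable X) (hY : Measurable Y)
    (hX_int : Integrable X μ) (hY_int : Integrable Y μ) (hXY_int : Integrable (X * Y) μ)
    (hXY : CondIndepFun m hm X Y μ) : μ[X * Y | m] =ᵐ[μ] μ[X | m] * μ[Y | m] := by
  filter_upwards [condExp_ae_eq_integral_condExpKernel hm hX_int,
    condExp_ae_eq_integral_condExpKernel hm hY_int,
    condExp_ae_eq_integral_condExpKernel hm hXY_int,
    ae_indepFun_condExpKernel_of_condIndepFun hX hY hXY] with ω hXω hYω hXYω hindep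
  rw [Pi.mul_apply, hXω, hYω, hXYω]
  exact hindep.integral_mul_eq_mul_integral hX.aestronglyMeasurable hY.aestronglyMeasurable

theorem inv_condExp_mul_condExp_mul_of_condIndepFun {A W : Ω → ℝ} (hA : Measurable A)
    (hW : Measurable W) (hA_int : Integrable A μ) (hW_int : Integrable W μ)
    (hAW_int : Integrable (A * W) μ) (hA_ne : ∀ᵐ ω ∂μ, μ[A | m] ω ≠ 0)
    (hAW : CondIndepFun m hm A W μ) : (μ[A | m])⁻¹ * μ[A * W | m] =ᵐ[μ] μ[W | m] := by
  filter_upwards [condExp_mul_of_condIndepFun hA hW hA_int hW_int hAW_int hAW, hA_ne]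
    with ω hω hω_ne
  rw [Pi.mul_apply, Pi.inv_apply, hω, Pi.mul_apply, inv_mul_cancel_left₀ hω_ne]

theorem integrable_inv_condExp_mul_of_condIndepFun {A W : Ω → ℝ} (hA : Measurable A)
    (hW : Measurable W) (hA_int : Integrable A μ) (hW_int : Integrable W μ)
    (hAW_int : Integrable (A * W) μ) (hA0 : 0 ≤ᵐ[μ] A) (hA_ne : ∀ᵐ ω ∂μ, μ[A | m] ω ≠ 0)
    (hAW : CondIndepFun m hm A W μ) : Integrable ((μ[A | m])⁻¹ * (A * W)) μ := by
  have hw : StronglyMeasurable[m] (μ[A | m])⁻¹ := stronglyMeasurable_condExp.inv₀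
  have abs_mul_eq : |A * W| =ᵐ[μ] A * |W| := by
    filter_upwards [hA0] with ω hω
    simp only [Pi.abs_apply, Pi.mul_apply, abs_mul, abs_of_nonneg hω]
  have habs_int : Integrable (A * |W|) μ := hAW_int.abs.congr abs_mul_eq
  have habs_nonneg : 0 ≤ᵐ[μ] A * |W| := by
    filter_upwards [hA0] with ω hω using mul_nonneg hω (abs_nonneg (W ω))
  have hweighted_abs : Integrable ((μ[A | m])⁻¹ * (A * |W|)) μ := by
    rw [← integrable_mul_condExp_iff hm hw habs_int habs_nonneg]
    exact integrable_condExp.congr (inv_condExp_mul_condExp_mul_of_condIndepFun hA hW.abs hA_int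
      hW_int.abs habs_int hA_ne (hAW.comp measurable_id measurable_abs)).symm
  refine hweighted_abs.mono ((hw.mono hm).aestronglyMeasurable.mul hAW_int.1)
    (.of_forall fun ω => ?_)
  simp only [Pi.mul_apply, Pi.abs_apply, norm_mul, Real.norm_eq_abs, abs_abs, le_refl]

theorem integral_div_mul_of_condIndepFun {A W e : Ω → ℝ} (hA : Measurable A)
    (hW : Measurable W) (hA_int : Integrable A μ) (hW_int : Integrable W μ)
    (hAW_int : Integrable (A * W) μ) (hA0 : 0 ≤ᵐ[μ] A) (he : μ[A | m] =ᵐ[μ] e)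
    (he_ne : ∀ᵐ ω ∂μ, e ω ≠ 0) (hAW : CondIndepFun m hm A W μ) :
    ∫ ω, A ω / e ω * W ω ∂μ = ∫ ω, W ω ∂μ := by
  have hA_ne : ∀ᵐ ω ∂μ, μ[A | m] ω ≠ 0 := by
    filter_upwards [he, he_ne] with ω hω hω_ne
    rwa [hω]
  have hw_int : Integrable ((μ[A | m])⁻¹ * (A * W)) μ :=
    integrable_inv_condExp_mul_of_condIndepFun hA hW hA_int hW_int hAW_int hA0 hA_ne hAW
  calc ∫ ω, A ω / e ω * W ω ∂μ
      = ∫ ω, ((μ[A | m])⁻¹ * (A * W)) ω ∂μ := by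
        refine integral_congr_ae ?_
        filter_upwards [he] with ω hω
        rw [Pi.mul_apply, Pi.inv_apply, Pi.mul_apply, hω, div_mul_eq_mul_div, div_eq_inv_mul]
    _ = ∫ ω, μ[(μ[A | m])⁻¹ * (A * W) | m] ω ∂μ := (integral_condExp hm).symm
    _ = ∫ ω, μ[W | m] ω ∂μ := integral_congr_ae <|
        (condExp_mul_of_stronglyMeasurable_left stronglyMeasurable_condExp.inv₀ hw_int
          hAW_int).trans (inv_condExp_mul_condExp_mul_of_condIndepFun hA hW hA_int hW_int
          hAW_int hA_ne hAW)
    _ = ∫ ω, W ω ∂μ := integral_condExp hm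

theorem integral_ipw_eq_integral_potentialOutcome {𝓨 : Type*} [MeasurableSpace 𝓨] {A e : Ω → ℝ}
    {Θ Y : Ω → 𝓨} {f : 𝓨 → ℝ} (hA : Measurable A) (hY : Measurable Y) (hf : Measurable f)
    (hfY_int : Integrable (fun ω => f (Y ω)) μ) (hA01 : ∀ᵐ ω ∂μ, A ω ∈ Set.Icc 0 1)
    (he : μ[A | m] =ᵐ[μ] e) (he_ne : ∀ᵐ ω ∂μ, e ω ≠ 0) (hΘ : ∀ᵐ ω ∂μ, A ω ≠ 0 → Θ ω = Y ω)
    (hAY : CondIndepFun m hm A Y μ) :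
    ∫ ω, A ω / e ω * f (Θ ω) ∂μ = ∫ ω, f (Y ω) ∂μ := by
  have hA_norm : ∀ᵐ ω ∂μ, ‖A ω‖ ≤ 1 := by
    filter_upwards [hA01] with ω hω
    rw [Real.norm_of_nonneg hω.1]
    exact hω.2
  have consistency : ∫ ω, A ω / e ω * f (Θ ω) ∂μ = ∫ ω, A ω / e ω * f (Y ω) ∂μ := by
    refine integral_congr_ae ?_
    filter_upwards [hΘ] with ω hω
    rcases eq_or_ne (A ω) 0 with hAω | hAω
    · simp only [hAω, zero_div, zero_mul]
    · rw [hω hAω]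
  rw [consistency]
  exact integral_div_mul_of_condIndepFun hA (hf.comp hY)
    (.of_bound hA.aestronglyMeasurable 1 hA_norm) hfY_int
    (hfY_int.bdd_mul hA.aestronglyMeasurable hA_norm) (hA01.mono fun _ hω => hω.1) he he_ne
    (hAY.comp measurable_id hf)

theorem integral_ipw_compl_eq_integral_potentialOutcome {𝓨 : Type*} [MeasurableSpace 𝓨]
    {A e : Ω → ℝ} {Θ Y : Ω → 𝓨} {f : 𝓨 → ℝ} (hA : Measurable A) (hY : Measurable Y)
    (hf : Measurable f) (hfY_int : Integrable (fun ω => f (Y ω)) μ)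
    (hA01 : ∀ᵐ ω ∂μ, A ω ∈ Set.Icc 0 1) (he : μ[A | m] =ᵐ[μ] e) (he_ne : ∀ᵐ ω ∂μ, e ω ≠ 1)
    (hΘ : ∀ᵐ ω ∂μ, A ω ≠ 1 → Θ ω = Y ω) (hAY : CondIndepFun m hm A Y μ) :
    ∫ ω, (1 - A ω) / (1 - e ω) * f (Θ ω) ∂μ = ∫ ω, f (Y ω) ∂μ := by
  have hA_int : Integrable A μ := .of_mem_Icc 0 1 hA.aemeasurable hA01
  refine integral_ipw_eq_integral_potentialOutcome (hA.const_sub 1) hY hf hfY_int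
    (hA01.mono fun ω hω => Set.Icc.mem_iff_one_sub_mem.mp hω) ?_
    (he_ne.mono fun ω hω => sub_ne_zero.mpr hω.symm)
    (hΘ.mono fun ω hω hAω => hω (sub_ne_zero.mp hAω).symm)
    (hAY.comp (measurable_id.const_sub 1) measurable_id)
  filter_upwards [condExp_const_sub hm (1 : ℝ) hA_int, he] with ω hsub hω
  rw [hsub, hω]

end Propensity

theorem adte_identified_general
    {Ω : Type*} {m mΩ : MeasurableSpace Ω} [StandardBorelSpace Ω] {hm : m ≤ mΩ}
    {μ : Measure Ω} [IsFiniteMeasure μ] {A e Θ1 Θ0 Θ : Ω → ℝ}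
    (hA : Measurable A) (hΘ1 : Measurable Θ1) (hΘ0 : Measurable Θ0)
    (hA01 : ∀ᵐ ω ∂μ, A ω = 0 ∨ A ω = 1) (he : μ[A | m] =ᵐ[μ] e)
    (he01 : ∀ᵐ ω ∂μ, 0 < e ω ∧ e ω < 1)
    (hAΘ1 : CondIndepFun m hm A Θ1 μ) (hAΘ0 : CondIndepFun m hm A Θ0 μ)
    (hΘ : ∀ᵐ ω ∂μ, Θ ω = A ω * Θ1 ω + (1 - A ω) * Θ0 ω) :
    atan2 (∫ ω, Real.sin (Θ1 ω) ∂μ) (∫ ω, Real.cos (Θ1 ω) ∂μ)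
        - atan2 (∫ ω, Real.sin (Θ0 ω) ∂μ) (∫ ω, Real.cos (Θ0 ω) ∂μ)
      = atan2 (∫ ω, A ω / e ω * Real.sin (Θ ω) ∂μ) (∫ ω, A ω / e ω * Real.cos (Θ ω) ∂μ)
        - atan2 (∫ ω, (1 - A ω) / (1 - e ω) * Real.sin (Θ ω) ∂μ)
            (∫ ω, (1 - A ω) / (1 - e ω) * Real.cos (Θ ω) ∂μ) := by
  have hA_Icc : ∀ᵐ ω ∂μ, A ω ∈ Set.Icc 0 1 := by
    filter_upwards [hA01] with ω hω
    rcases hω with hω | hω <;> simp [hω]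
  have treated : ∀ᵐ ω ∂μ, A ω ≠ 0 → Θ ω = Θ1 ω := by
    filter_upwards [hA01, hΘ] with ω hω hΘω hAω
    rw [hΘω, hω.resolve_left hAω, one_mul, sub_self, zero_mul, add_zero]
  have control : ∀ᵐ ω ∂μ, A ω ≠ 1 → Θ ω = Θ0 ω := by
    filter_upwards [hA01, hΘ] with ω hω hΘω hAω
    rw [hΘω, hω.resolve_right hAω, zero_mul, sub_zero, one_mul, zero_add]
  have he_ne_zero : ∀ᵐ ω ∂μ, e ω ≠ 0 := he01.mono fun _ hω => hω.1.ne'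
  have he_ne_one : ∀ᵐ ω ∂μ, e ω ≠ 1 := he01.mono fun _ hω => hω.2.ne
  have sin_integrable {Y : Ω → ℝ} (hY : Measurable Y) : Integrable (fun ω => Real.sin (Y ω)) μ :=
    .of_bound hY.sin.aestronglyMeasurable 1 (.of_forall fun ω => Real.abs_sin_le_one (Y ω))
  have cos_integrable {Y : Ω → ℝ} (hY : Measurable Y) : Integrable (fun ω => Real.cos (Y ω)) μ :=
    .of_bound hY.cos.aestronglyMeasurable 1 (.of_forall fun ω => Real.abs_cos_le_one (Y ω))
  rw [integral_ipw_eq_integral_potentialOutcome hA hΘ1 Real.measurable_sin (sin_integrable hΘ1)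
      hA_Icc he he_ne_zero treated hAΘ1,
    integral_ipw_eq_integral_potentialOutcome hA hΘ1 Real.measurable_cos (cos_integrable hΘ1)
      hA_Icc he he_ne_zero treated hAΘ1,
    integral_ipw_compl_eq_integral_potentialOutcome hA hΘ0 Real.measurable_sin
      (sin_integrable hΘ0) hA_Icc he he_ne_one control hAΘ0,
    integral_ipw_compl_eq_integral_potentialOutcome hA hΘ0 Real.measurable_cos
      (cos_integrable hΘ0) hA_Icc he he_ne_one control hAΘ0]

/-- **Identification of the average direction treatment effect (ADTE).** -/
theorem adte_identified
    {Ω : Type*} [MeasurableSpace Ω] [StandardBorelSpace Ω] [Nonempty Ω]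
    (μ : Measure Ω) [IsProbabilityMeasure μ] {p : ℕ}
    (A : Ω → ℝ) (X : Ω → (Fin p → ℝ)) (Θ1 Θ0 : Ω → ℝ)
    (hA : Measurable A) (hX : Measurable X) (hΘ1 : Measurable Θ1) (hΘ0 : Measurable Θ0)
    (hA01 : ∀ ω, A ω = 0 ∨ A ω = 1)
    (ps : (Fin p → ℝ) → ℝ) (hps : Measurable ps)
    (hps01 : ∀ x, 0 < ps x ∧ ps x < 1)
    (hcond : μ[A | MeasurableSpace.comap X inferInstance] =ᵐ[μ] fun ω => ps (X ω))
    (hSI : CondIndepFun (MeasurableSpace.comap X inferInstance) hX.comap_le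
      A (fun ω => (Θ1 ω, Θ0 ω)) μ)
    (Θ : Ω → ℝ) (hΘ : ∀ ω, Θ ω = A ω * Θ1 ω + (1 - A ω) * Θ0 ω)
    (α1 β1 α0 β0 : ℝ)
    (hα1 : α1 = ∫ ω, Real.cos (Θ1 ω) ∂μ) (hβ1 : β1 = ∫ ω, Real.sin (Θ1 ω) ∂μ)
    (hα0 : α0 = ∫ ω, Real.cos (Θ0 ω) ∂μ) (hβ0 : β0 = ∫ ω, Real.sin (Θ0 ω) ∂μ)
    (τ : ℝ) (hτ : τ = atan2 β1 α1 - atan2 β0 α0) :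
    τ = atan2 (∫ ω, (A ω / ps (X ω)) * Real.sin (Θ ω) ∂μ)
              (∫ ω, (A ω / ps (X ω)) * Real.cos (Θ ω) ∂μ)
      - atan2 (∫ ω, ((1 - A ω) / (1 - ps (X ω))) * Real.sin (Θ ω) ∂μ)
              (∫ ω, ((1 - A ω) / (1 - ps (X ω))) * Real.cos (Θ ω) ∂μ) := by
  subst hα1 hβ1 hα0 hβ0 hτ
  exact adte_identified_general hA hΘ1 hΘ0 (.of_forall hA01) hcond (.of_forall fun ω => hps01 (X ω))
    (hSI.comp measurable_id measurable_fst) (hSI.comp measurable_id measurable_snd) (.of_forall hΘ)
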